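/- Let G be a branch group acting on a rooted tree T and let H be a subgroup of finite index in G. Then every finite normal subgroup of H is trivial. -/

import Mathlib

/-!  Common definitions: rooted trees of type `(m n)`, tree automorphisms,
rigid stabilizers, branch groups, and auxiliary notions. -/

universe u

/-- Vertices of the rooted tree of type `m`: finite sequences `(x_0, …, x_{n-1})`
with `x_i ∈ {1, …, m i}` (encoded as `Fin (m i)`). -/
def Vertex (m : ℕ → ℕ) : Type := Σ n : ℕ, ∀ i : Fin n, Fin (m i)

namespace Vertex

variable {m : ℕ → ℕ}

/-- The level of a vertex: its length. -/
def level (v : Vertex m) : ℕ := v.1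

/-- `v` is a (weak) prefix of `w`; i.e. `w` lies in the subtree `T_v`
(`w = v` or `w` is a descendant of `v`). -/
def IsPrefix (v w : Vertex m) : Prop :=
  ∃ h : v.1 ≤ w.1, ∀ i : Fin v.1, w.2 (Fin.castLE h i) = v.2 i

/-- `w` is a child (one-step extension) of `v`. -/
def IsChild (v w : Vertex m) : Prop := w.1 = v.1 + 1 ∧ IsPrefix v w

end Vertex

/-- The `n`-th layer `L_n` of the tree: all vertices of level `n`. -/
def layer (m : ℕ → ℕ) (n : ℕ) : Set (Vertex m) := {v | v.1 = n}

section Rist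

variable {m : ℕ → ℕ} (G : Type*) [Group G] [MulAction G (Vertex m)]

/-- The rigid stabilizer of a vertex `v`: all elements fixing every vertex
outside the subtree `T_v`. -/
def rist (v : Vertex m) : Subgroup G :=
  ⨅ w ∈ {w : Vertex m | ¬ Vertex.IsPrefix v w}, MulAction.stabilizer G w

/-- The subgroup generated by the rigid stabilizers of the vertices in `X`. -/
def ristSet (X : Set (Vertex m)) : Subgroup G := ⨆ v ∈ X, rist G v

/-- `rist_G(n)`, the rigid stabilizer of the `n`-th layer. -/
def ristLayer (m : ℕ → ℕ) (G : Type*) [Group G] [MulAction G (Vertex m)] (n : ℕ) :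
    Subgroup G :=
  ristSet G (layer m n)

/-- The orbit of the vertex `v` under a subgroup `H ≤ G`. -/
def subOrbit (H : Subgroup G) (v : Vertex m) : Set (Vertex m) :=
  {w | ∃ h ∈ H, h • v = w}

/-- The set of orbits of a subgroup `H ≤ G` on a set `X` of vertices. -/
def orbitsOn (H : Subgroup G) (X : Set (Vertex m)) : Set (Set (Vertex m)) :=
  (fun v => subOrbit G H v) '' X

end Rist

/-- `G` is a branch group on the rooted tree of type `m` (with respect to the given
action): the action is faithful and by tree automorphisms, `G` acts transitively on
each layer, and each `rist_G(n)` has finite index in `G`. -/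
structure IsBranchGroup (m : ℕ → ℕ) (G : Type*) [Group G] [MulAction G (Vertex m)] :
    Prop where
  faithful : ∀ g : G, (∀ v : Vertex m, g • v = v) → g = 1
  aut : ∀ (g : G) (v w : Vertex m), Vertex.IsChild v w ↔ Vertex.IsChild (g • v) (g • w)
  trans : ∀ v w : Vertex m, v.1 = w.1 → ∃ g : G, g • v = w
  ristFiniteIndex : ∀ n : ℕ, (ristLayer m G n).FiniteIndex

/-- A group is virtually soluble if it has a soluble subgroup of finite index. -/
def VirtuallySolvable (Γ : Type*) [Group Γ] : Prop :=
  ∃ S : Subgroup Γ, S.FiniteIndex ∧ IsSolvable ↥S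

/-- A group is virtually abelian if it has an abelian subgroup of finite index. -/
def VirtuallyAbelian (Γ : Type*) [Group Γ] : Prop :=
  ∃ S : Subgroup Γ, S.FiniteIndex ∧ ∀ a ∈ S, ∀ b ∈ S, a * b = b * a

/-- For subgroups `A ≤ B` of a group with `A` normalised by `B`, this says that the
factor `B/A` belongs to the class `𝔛`. -/
def FactorIn (𝔛 : (Γ : Type u) → [inst : Group Γ] → Prop) {G : Type u} [Group G]
    (A B : Subgroup G) : Prop :=
  ∃ hn : (A.subgroupOf B).Normal, letI := hn; 𝔛 (↥B ⧸ A.subgroupOf B)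

/-- The factor `B/A` is virtually soluble. -/
def FactorVirtuallySolvable {G : Type*} [Group G] (A B : Subgroup G) : Prop :=
  ∃ hn : (A.subgroupOf B).Normal,
    letI := hn; VirtuallySolvable (↥B ⧸ A.subgroupOf B)

/-- The factor `B/A` is virtually abelian. -/
def FactorVirtuallyAbelian {G : Type*} [Group G] (A B : Subgroup G) : Prop :=
  ∃ hn : (A.subgroupOf B).Normal,
    letI := hn; VirtuallyAbelian (↥B ⧸ A.subgroupOf B)

/-- `Γ` has `r` infinite normal subgroups that generate their direct product in `Γ`:
each of them intersects trivially the subgroup generated by the others. -/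
def HasIndepFamily (Γ : Type*) [Group Γ] (r : ℕ) : Prop :=
  ∃ N : Fin r → Subgroup Γ, (∀ i, (N i).Normal) ∧ (∀ i, Infinite ↥(N i)) ∧
    ∀ i, N i ⊓ (⨆ j ∈ ({i}ᶜ : Set (Fin r)), N j) = ⊥

/-! A nontrivial element `k` moves some vertex `v`, hence moves the subtree `T_v` off itself, so
that no nontrivial element of `rist_G(v)` commutes with `k`. If `k` lies in a finite subgroup
normalised by a subgroup of finite index, then its centraliser has finite index, and it meets
`rist_G(v)` trivially; hence `rist_G(v)` is finite. This is impossible when all rigid stabilizers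
of vertices are nontrivial: an element of `rist_G(v)` that moves `w` is not in `rist_G(w)`, so
`rist_G(w)` is a proper subgroup of `rist_G(v)`, and an infinite descent follows. -/

section FiniteIndex

variable {Γ : Type*} [Group Γ]

theorem finiteIndex_centralizer_of_le_normalizer {H K : Subgroup Γ} [H.FiniteIndex] [Finite K]
    (h : H ≤ Subgroup.normalizer (K : Set Γ)) :
    (Subgroup.centralizer (K : Set Γ)).FiniteIndex := by
  have hN : (Subgroup.normalizer (K : Set Γ)).FiniteIndex := Subgroup.finiteIndex_of_le h
  have hker : K.normalizerMonoidHom.ker.FiniteIndex := inferInstance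
  rw [Subgroup.normalizerMonoidHom_ker] at hker
  refine ⟨?_⟩
  rw [← Subgroup.relIndex_mul_index (Subgroup.centralizer_le_normalizer (K : Set Γ))]
  exact mul_ne_zero hker.index_ne_zero hN.index_ne_zero

theorem finite_of_disjoint_of_finiteIndex {A B : Subgroup Γ} [B.FiniteIndex]
    (h : Disjoint A B) : Finite A := by
  have hbot : B.subgroupOf A = ⊥ := Subgroup.subgroupOf_eq_bot.2 h.symm
  exact (Subgroup.finite_iff_finite_and_finiteIndex (B.subgroupOf A)).2
    ⟨by rw [hbot]; infer_instance, inferInstance⟩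

end FiniteIndex

namespace Vertex

variable {m : ℕ → ℕ} {u v w : Vertex m}

theorem IsPrefix.refl (v : Vertex m) : v.IsPrefix v := ⟨le_rfl, fun _ => rfl⟩

theorem IsPrefix.trans (huv : u.IsPrefix v) (hvw : v.IsPrefix w) : u.IsPrefix w := by
  obtain ⟨huv', hu⟩ := huv
  obtain ⟨hvw', hv⟩ := hvw
  exact ⟨huv'.trans hvw', fun i => (hv (Fin.castLE huv' i)).trans (hu i)⟩

theorem IsPrefix.eq_of_level_eq (huw : u.IsPrefix w) (hvw : v.IsPrefix w)
    (hl : u.level = v.level) : u = v := by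
  obtain ⟨n, x⟩ := u
  obtain ⟨_, y⟩ := v
  obtain rfl : n = _ := hl
  obtain ⟨_, hx⟩ := huw
  obtain ⟨_, hy⟩ := hvw
  exact congrArg (Sigma.mk n) (funext fun i => (hx i).symm.trans (hy i))

theorem IsPrefix.exists_isChild (h : v.IsPrefix w) (hl : v.level < w.level) :
    ∃ u : Vertex m, v.IsPrefix u ∧ u.IsChild w := by
  obtain ⟨_ | n, x⟩ := w
  · exact absurd hl (Nat.not_lt_zero _)
  · exact ⟨⟨n, fun i => x i.castSucc⟩, ⟨Nat.le_of_lt_succ hl, h.2⟩, rfl, n.le_succ, fun _ => rfl⟩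

theorem isPrefix_iff_reflTransGen_isChild :
    v.IsPrefix w ↔ Relation.ReflTransGen IsChild v w := by
  constructor
  · intro h
    induction hn : w.level generalizing w with
    | zero =>
      have hv : v.level = w.level := by rw [hn]; exact Nat.le_zero.1 (hn ▸ h.1)
      rw [h.eq_of_level_eq (.refl w) hv]
    | succ n ih =>
      rcases h.1.eq_or_lt with heq | hlt
      · rw [h.eq_of_level_eq (.refl w) heq]
      · obtain ⟨u, hvu, huw⟩ := h.exists_isChild hlt
        exact (ih hvu (Nat.succ.inj (huw.1.symm.trans hn))).tail huw
  · intro h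
    induction h with
    | refl => exact .refl v
    | tail _ huw ih => exact ih.trans huw.2

/-- The root of the tree, the empty sequence. -/
def root (m : ℕ → ℕ) : Vertex m := ⟨0, finZeroElim⟩

theorem root_isPrefix (v : Vertex m) : (root m).IsPrefix v := ⟨v.level.zero_le, finZeroElim⟩

/-- The subtree `T_v`: the vertex `v` together with its descendants. -/
def subtree (v : Vertex m) : Set (Vertex m) := {w | v.IsPrefix w}

theorem disjoint_subtree_of_level_eq (hl : u.level = v.level) (hne : u ≠ v) :
    Disjoint u.subtree v.subtree :=
  Set.disjoint_left.2 fun _ hu hv => hne (IsPrefix.eq_of_level_eq hu hv hl)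

end Vertex

/-- The elements of `G` act as automorphisms of the tree. One implication is enough, since the
inverse of an element of `G` also preserves the child relation. -/
def IsTreeAction (m : ℕ → ℕ) (G : Type*) [Group G] [MulAction G (Vertex m)] : Prop :=
  ∀ (g : G) ⦃v w : Vertex m⦄, v.IsChild w → (g • v).IsChild (g • w)

namespace IsTreeAction

variable {m : ℕ → ℕ} {G : Type*} [Group G] [MulAction G (Vertex m)]

open scoped Pointwise

theorem smul_isPrefix (hT : IsTreeAction m G) (g : G) {v w : Vertex m} (h : v.IsPrefix w) :
    (g • v).IsPrefix (g • w) :=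
  Vertex.isPrefix_iff_reflTransGen_isChild.2 <|
    (Vertex.isPrefix_iff_reflTransGen_isChild.1 h).lift (g • ·) fun _ _ huv => hT g huv

theorem smul_subtree (hT : IsTreeAction m G) (g : G) (v : Vertex m) :
    g • v.subtree = (g • v).subtree := by
  ext w
  rw [Set.mem_smul_set_iff_inv_smul_mem]
  refine ⟨fun h => ?_, fun h => ?_⟩
  · exact smul_inv_smul g w ▸ hT.smul_isPrefix g h
  · exact inv_smul_smul g v ▸ hT.smul_isPrefix g⁻¹ h

theorem smul_root (hT : IsTreeAction m G) (g : G) : g • Vertex.root m = Vertex.root m := by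
  have h : (g • Vertex.root m).IsPrefix (Vertex.root m) := by
    simpa only [smul_inv_smul] using hT.smul_isPrefix g (Vertex.root_isPrefix (g⁻¹ • Vertex.root m))
  exact h.eq_of_level_eq (.refl _) (Nat.le_zero.1 h.1)

theorem level_smul (hT : IsTreeAction m G) (g : G) (v : Vertex m) :
    (g • v).level = v.level := by
  induction Vertex.isPrefix_iff_reflTransGen_isChild.1 (Vertex.root_isPrefix v) with
  | refl => rw [hT.smul_root]
  | @tail u w _ huw ih =>
    calc (g • w).level = (g • u).level + 1 := (hT g huw).1
      _ = u.level + 1 := by rw [ih]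
      _ = w.level := huw.1.symm

theorem disjoint_subtree_smul_subtree (hT : IsTreeAction m G) {g : G} {v : Vertex m}
    (h : g • v ≠ v) : Disjoint v.subtree (g • v.subtree) := by
  rw [hT.smul_subtree]
  exact Vertex.disjoint_subtree_of_level_eq (hT.level_smul g v).symm h.symm

end IsTreeAction

section RigidStabilizer

variable {m : ℕ → ℕ} {G : Type*} [Group G] [MulAction G (Vertex m)] {v w : Vertex m}

open scoped Pointwise

theorem rist_eq_fixingSubgroup (v : Vertex m) : rist G v = fixingSubgroup G v.subtreeᶜ := by
  ext g
  simp only [rist, Subgroup.mem_iInf, MulAction.mem_stabilizer_iff, mem_fixingSubgroup_iff]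
  rfl

theorem mem_rist_iff {g : G} : g ∈ rist G v ↔ (MulAction.fixedBy (Vertex m) g)ᶜ ⊆ v.subtree := by
  rw [rist_eq_fixingSubgroup, mem_fixingSubgroup_compl_iff_movedBy_subset]

theorem rist_anti (h : v.IsPrefix w) : rist G w ≤ rist G v := fun _ hg =>
  mem_rist_iff.2 fun _ hu => h.trans (mem_rist_iff.1 hg hu)

theorem IsTreeAction.map_conj_rist (hT : IsTreeAction m G) (g : G) (v : Vertex m) :
    (rist G v).map (MulAut.conj g).toMonoidHom = rist G (g • v) := by
  rw [rist_eq_fixingSubgroup, rist_eq_fixingSubgroup]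
  apply SubMulAction.fixingSubgroup_map_conj_eq
  rw [Set.smul_set_compl, hT.smul_subtree]

theorem IsTreeAction.rist_le_stabilizer (hT : IsTreeAction m G) (v : Vertex m) :
    rist G v ≤ MulAction.stabilizer G v := by
  intro g hg
  by_contra hgv
  have hmoved : g • v ∈ (MulAction.fixedBy (Vertex m) g)ᶜ :=
    MulAction.smul_mem_fixedBy_iff_mem_fixedBy.not.2 hgv
  exact Set.disjoint_left.1 (hT.disjoint_subtree_smul_subtree hgv) (mem_rist_iff.1 hg hmoved)
    (Set.smul_mem_smul_set (Vertex.IsPrefix.refl v))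

variable [FaithfulSMul G (Vertex m)]

theorem IsTreeAction.disjoint_rist_centralizer (hT : IsTreeAction m G) {k : G} (h : k • v ≠ v) :
    Disjoint (rist G v) (Subgroup.centralizer {k}) := by
  rw [Subgroup.disjoint_def]
  intro r hr hrk
  by_contra hr1
  have hsupp := mem_rist_iff.1 hr
  exact MulAction.not_commute_of_disjoint_movedBy_preimage hr1
    ((hT.disjoint_subtree_smul_subtree h).mono hsupp (Set.smul_set_mono hsupp))
    (Subgroup.mem_centralizer_singleton_iff.1 hrk)

theorem IsTreeAction.exists_rist_lt (hT : IsTreeAction m G) (h : rist G v ≠ ⊥) :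
    ∃ w : Vertex m, rist G w < rist G v := by
  obtain ⟨g, hg, hg1⟩ := (Subgroup.bot_or_exists_ne_one _).resolve_left h
  obtain ⟨w, hw⟩ : ∃ w : Vertex m, g • w ≠ w := by
    by_contra! hfix
    exact hg1 (FaithfulSMul.eq_of_smul_eq_smul fun w => by rw [hfix w, one_smul])
  have hvw : v.IsPrefix w := mem_rist_iff.1 hg hw
  exact ⟨w, lt_of_le_of_ne (rist_anti hvw) fun heq =>
    hw (hT.rist_le_stabilizer w (heq ▸ hg))⟩

theorem IsTreeAction.infinite_rist (hT : IsTreeAction m G)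
    (hrist : ∀ w : Vertex m, rist G w ≠ ⊥) (v : Vertex m) : Infinite (rist G v) := by
  by_contra hv
  obtain ⟨w, hw, hmin⟩ := exists_minimalFor_of_wellFoundedLT
    (fun w : Vertex m => Finite (rist G w)) (fun w => Nat.card (rist G w))
    ⟨v, not_infinite_iff_finite.1 hv⟩
  obtain ⟨u, hu⟩ := hT.exists_rist_lt (hrist w)
  have hcard : Nat.card (rist G u) ≤ Nat.card (rist G w) := Subgroup.card_le_of_le hu.le
  have hfin : Finite (rist G u) := Finite.Set.subset (rist G w : Set G) hu.le
  exact hu.ne (Subgroup.eq_of_le_of_card_ge hu.le (hmin hfin hcard))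

end RigidStabilizer

theorem card_layer (m : ℕ → ℕ) (n : ℕ) : Nat.card (layer m n) = ∏ i : Fin n, m i := by
  calc Nat.card (layer m n) = Nat.card (∀ i : Fin n, Fin (m i)) :=
        Nat.card_congr (Equiv.sigmaSubtype n)
    _ = ∏ i : Fin n, m i := by simp only [Nat.card_pi, Nat.card_fin]

namespace IsBranchGroup

variable {m : ℕ → ℕ} {G : Type*} [Group G] [MulAction G (Vertex m)]

theorem faithfulSMul (hG : IsBranchGroup m G) : FaithfulSMul G (Vertex m) where
  eq_of_smul_eq_smul {g h} hgh := by
    refine inv_mul_eq_one.1 (hG.faithful (g⁻¹ * h) fun v => ?_)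
    rw [mul_smul, ← hgh v, inv_smul_smul]

theorem isTreeAction (hG : IsBranchGroup m G) : IsTreeAction m G :=
  fun g v w => (hG.aut g v w).1

theorem card_layer_le [Finite G] (hG : IsBranchGroup m G) (v : Vertex m) :
    Nat.card (layer m v.level) ≤ Nat.card G := by
  have horbit : layer m v.level ⊆ Set.range fun g : G => g • v := fun w hw => hG.trans v w hw.symm
  exact (Nat.card_mono (Set.finite_range _) horbit).trans (Finite.card_range_le _)

theorem infinite (hG : IsBranchGroup m G) (hm : ∀ n, 2 ≤ m n) : Infinite G := by
  by_contra hfin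
  rw [not_infinite_iff_finite] at hfin
  let n := Nat.card G
  let v : Vertex m := ⟨n, fun i => ⟨0, two_pos.trans_le (hm i)⟩⟩
  have hlayer : 2 ^ n ≤ Nat.card (layer m n) := by
    rw [card_layer]
    simpa using Finset.pow_card_le_prod Finset.univ (fun i : Fin n => m i) 2 fun i _ => hm i
  exact (hlayer.trans (hG.card_layer_le v)).not_gt Nat.lt_two_pow_self

theorem rist_ne_bot [Infinite G] (hG : IsBranchGroup m G) (v : Vertex m) : rist G v ≠ ⊥ := by
  intro hv
  have hlayer : ristLayer m G v.level = ⊥ := by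
    refine iSup₂_eq_bot.2 fun w hw => ?_
    obtain ⟨g, rfl⟩ := hG.trans v w hw.symm
    rw [← hG.isTreeAction.map_conj_rist, hv, Subgroup.map_bot]
  have hindex : (⊥ : Subgroup G).FiniteIndex := hlayer ▸ hG.ristFiniteIndex v.level
  exact not_finite_iff_infinite.2 ‹Infinite G›
    ((Subgroup.finite_iff_finite_and_finiteIndex (⊥ : Subgroup G)).2 ⟨inferInstance, hindex⟩)

end IsBranchGroup

theorem finite_normal_subgroup_trivial_general {m : ℕ → ℕ} {G : Type*} [Group G]
    [MulAction G (Vertex m)] [FaithfulSMul G (Vertex m)] (hT : IsTreeAction m G)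
    (hrist : ∀ v : Vertex m, rist G v ≠ ⊥) {H K : Subgroup G} [H.FiniteIndex] [Finite K]
    (hK : H ≤ Subgroup.normalizer (K : Set G)) : K = ⊥ := by
  rw [Subgroup.eq_bot_iff_forall]
  intro k hk
  refine FaithfulSMul.eq_of_smul_eq_smul fun v : Vertex m => ?_
  rw [one_smul]
  by_contra hv
  have := finiteIndex_centralizer_of_le_normalizer hK
  have hdisj : Disjoint (rist G v) (Subgroup.centralizer (K : Set G)) :=
    (hT.disjoint_rist_centralizer hv).mono_right
      (Subgroup.centralizer_le (Set.singleton_subset_iff.2 hk))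
  exact (hT.infinite_rist hrist v).not_finite (finite_of_disjoint_of_finiteIndex hdisj)

/-- **Lemma.** If `G` is a branch group on `T` and `H ≤ G` has finite index, then every
finite normal subgroup of `H` is trivial. -/
theorem finite_normal_subgroup_trivial
    (m : ℕ → ℕ) (hm : ∀ n, 2 ≤ m n)
    (G : Type*) [Group G] [MulAction G (Vertex m)] (hG : IsBranchGroup m G)
    (H : Subgroup G) [H.FiniteIndex]
    (K : Subgroup G) (hKH : K ≤ H) (hKn : ∀ h ∈ H, ∀ k ∈ K, h * k * h⁻¹ ∈ K)
    (hfin : Finite ↥K) :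
    K = ⊥ := by
  have := hG.faithfulSMul
  have := hG.infinite hm
  exact finite_normal_subgroup_trivial_general hG.isTreeAction hG.rist_ne_bot
    (Subgroup.le_normalizer_iff.2 hKn)
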